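/- arXiv:2008.13562 — 14 statements merged into one kernel-verified Lean document; each statement's English description precedes it below -/
import Mathlib

section
/- Let L be a commutative integral residuated lattice. Then the K-expansion K(L) is a commutative residuated lattice. Explicitly: the twist order (a,b) ≤ (c,d) iff a ≤ c and d ≤ b makes L × L a lattice whose join and meet are the K-expansion join and meet; the K-expansion product is associative and commutative with unit (1,1); and residuation holds: for all pairs X, Y, Z in L × L, X·Y ≤ Z if and only if X ≤ Y ⇨ Z. -/
/-- A commutative integral residuated lattice. -/
class CIRL (L : Type*) extends Lattice L, CommMonoid L where
  imp : L → L → L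
  resid : ∀ a b c : L, a * b ≤ c ↔ a ≤ imp b c
  le_one : ∀ a : L, a ≤ (1 : L)

namespace CIRL

variable {L : Type*} [CIRL L]

/-- The twist order on `K(L)`. -/
def kle (X Y : L × L) : Prop := X.1 ≤ Y.1 ∧ Y.2 ≤ X.2

/-- Join in `K(L)`. -/
def kjoin (X Y : L × L) : L × L := (X.1 ⊔ Y.1, X.2 ⊓ Y.2)

/-- Meet in `K(L)`. -/
def kmeet (X Y : L × L) : L × L := (X.1 ⊓ Y.1, X.2 ⊔ Y.2)

/-- Product in `K(L)`. -/
def kmul (X Y : L × L) : L × L := (X.1 * Y.1, imp X.1 Y.2 ⊓ imp Y.1 X.2)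

/-- Implication in `K(L)`. -/
def kimp (X Y : L × L) : L × L := (imp X.1 Y.1 ⊓ imp Y.2 X.2, X.1 * Y.2)

/-- The unit of `K(L)`. -/
def kone : L × L := ((1 : L), (1 : L))

end CIRL

open CIRL

/-- The K-expansion `K(L)` of a CIRL `L` is a commutative residuated lattice:
the twist order is a partial order in which `kjoin` is the least upper bound and
`kmeet` the greatest lower bound, `kmul` is associative and commutative with unit
`kone`, and `(kmul, kimp)` form a residuated pair. -/
theorem stmt0 {L : Type*} [CIRL L] :
    (∀ X : L × L, kle X X) ∧
    (∀ X Y : L × L, kle X Y → kle Y X → X = Y) ∧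
    (∀ X Y Z : L × L, kle X Y → kle Y Z → kle X Z) ∧
    (∀ X Y : L × L, kle X (kjoin X Y) ∧ kle Y (kjoin X Y) ∧
      ∀ Z : L × L, kle X Z → kle Y Z → kle (kjoin X Y) Z) ∧
    (∀ X Y : L × L, kle (kmeet X Y) X ∧ kle (kmeet X Y) Y ∧
      ∀ Z : L × L, kle Z X → kle Z Y → kle Z (kmeet X Y)) ∧
    (∀ X Y Z : L × L, kmul (kmul X Y) Z = kmul X (kmul Y Z)) ∧
    (∀ X Y : L × L, kmul X Y = kmul Y X) ∧
    (∀ X : L × L, kmul X kone = X) ∧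
    (∀ X Y Z : L × L, kle (kmul X Y) Z ↔ kle X (kimp Y Z)) := by
  refine ⟨fun X => ⟨le_rfl, le_rfl⟩, fun X Y h k => Prod.ext (le_antisymm h.1 k.1) (le_antisymm k.2 h.2),
    fun X Y Z h k => ⟨h.1.trans k.1, k.2.trans h.2⟩,
    fun X Y => ⟨⟨le_sup_left, inf_le_left⟩, ⟨le_sup_right, inf_le_right⟩,
      fun Z h k => ⟨sup_le h.1 k.1, le_inf h.2 k.2⟩⟩,
    fun X Y => ⟨⟨inf_le_left, le_sup_left⟩, ⟨inf_le_right, le_sup_right⟩,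
      fun Z h k => ⟨le_inf h.1 k.1, sup_le h.2 k.2⟩⟩, ?_, ?_, ?_, ?_⟩
  · intro X Y Z
    refine Prod.ext (mul_assoc _ _ _) (eq_of_forall_le_iff fun t => ?_)
    simp only [kmul, le_inf_iff, ← CIRL.resid]
    rw [show t * (X.1 * Y.1) = t * X.1 * Y.1 by rw [mul_assoc],
      show t * Z.1 * X.1 = t * X.1 * Z.1 by rw [mul_right_comm],
      show t * Z.1 * Y.1 = t * (Y.1 * Z.1) by rw [mul_assoc, mul_comm Z.1]]
    tauto
  · intro X Y
    exact Prod.ext (mul_comm _ _) (inf_comm _ _)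
  · intro X
    refine Prod.ext (mul_one _) (eq_of_forall_le_iff fun t => ?_)
    simp only [kmul, kone, le_inf_iff, ← CIRL.resid, mul_one]
    exact ⟨fun h => h.2, fun h => ⟨CIRL.le_one _, h⟩⟩
  · intro X Y Z
    simp only [kle, kmul, kimp, le_inf_iff, ← CIRL.resid]
    rw [mul_comm Z.2 X.1, mul_comm Z.2 Y.1]
    tauto
end

section
/- Let L be a commutative integral residuated lattice. Then K(L) is 1-involutive: for all (a,b) ∈ L × L, (a,b) ⇨ (1,1) = (b,a), and consequently ((a,b) ⇨ (1,1)) ⇨ (1,1) = (a,b). -/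
open CIRL

/-- `K(L)` is 1-involutive: `(a,b) ⇨ (1,1) = (b,a)`, and hence the double
negation of `(a,b)` is `(a,b)` itself. -/
theorem stmt1 {L : Type*} [CIRL L] (a b : L) :
    kimp (a, b) kone = (b, a) ∧ kimp (kimp (a, b) kone) kone = (a, b) := by
  have key : ∀ a b : L, kimp (a, b) kone = (b, a) := by
    intro a b
    have h1 : imp a (1 : L) = 1 :=
      le_antisymm (CIRL.le_one _) ((CIRL.resid _ _ _).1 (CIRL.le_one _))
    have h2 : imp (1 : L) b = b := by
      apply le_antisymm
      · have h := (CIRL.resid (imp (1 : L) b) 1 b).2 le_rfl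
        rwa [mul_one] at h
      · apply (CIRL.resid _ _ _).1
        rw [mul_one]
    have h3 : (1 : L) ⊓ b = b := inf_eq_right.2 (CIRL.le_one b)
    simp only [kimp, kone, h1, h2, h3, mul_one]
  exact ⟨key a b, by rw [key, key]⟩
end

section
/- Let L be a commutative integral residuated lattice. Then K(L) is 1-distributive: for all X, Y, Z in K(L) such that at least one of X, Y, Z equals (1,1), both lattice distributive laws hold, namely X ∧ (Y ∨ Z) = (X ∧ Y) ∨ (X ∧ Z) and X ∨ (Y ∧ Z) = (X ∨ Y) ∧ (X ∨ Z). -/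
open CIRL

/-- `K(L)` is 1-distributive: both lattice distributive laws hold whenever at
least one of the three elements is the unit `(1,1)`. -/
theorem stmt2 {L : Type*} [CIRL L] (X Y Z : L × L)
    (h : X = kone ∨ Y = kone ∨ Z = kone) :
    kmeet X (kjoin Y Z) = kjoin (kmeet X Y) (kmeet X Z) ∧
    kjoin X (kmeet Y Z) = kmeet (kjoin X Y) (kjoin X Z) := by
  obtain ⟨x1, x2⟩ := X
  obtain ⟨y1, y2⟩ := Y
  obtain ⟨z1, z2⟩ := Z
  have h1 : ∀ a : L, a ⊓ 1 = a := fun a => inf_eq_left.2 (CIRL.le_one a)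
  have h2 : ∀ a : L, 1 ⊓ a = a := fun a => inf_eq_right.2 (CIRL.le_one a)
  have h3 : ∀ a : L, a ⊔ 1 = 1 := fun a => sup_eq_right.2 (CIRL.le_one a)
  have h4 : ∀ a : L, 1 ⊔ a = 1 := fun a => sup_eq_left.2 (CIRL.le_one a)
  have h5 : ∀ a b : L, a ⊓ b ⊔ a = a := fun a b => sup_eq_right.2 inf_le_left
  have h6 : ∀ a b : L, (a ⊔ b) ⊓ a = a := fun a b => inf_eq_right.2 le_sup_left
  rcases h with h | h | h <;> simp only [kone, Prod.mk.injEq] at h <;>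
    obtain ⟨rfl, rfl⟩ := h <;>
    simp [kmeet, kjoin, h1, h2, h3, h4, h5, h6]
end

section
/- Let L be a commutative integral residuated lattice, and write ¬X = X ⇨ (1,1) for X ∈ K(L). Then K(L) satisfies equation (K1): X·Y ∧ (1,1) = (X ∧ (1,1))·(Y ∧ (1,1)) for all X, Y in K(L), and equation (K2): ((X ∧ (1,1)) ⇨ Y) ∧ ((¬Y ∧ (1,1)) ⇨ ¬X) = X ⇨ Y for all X, Y in K(L). -/
open CIRL

theorem CIRL.imp_one' {L : Type*} [CIRL L] (a : L) : imp a 1 = 1 :=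
  le_antisymm (CIRL.le_one _) ((CIRL.resid _ _ _).1 (CIRL.le_one _))

theorem CIRL.one_imp' {L : Type*} [CIRL L] (a : L) : imp 1 a = a := by
  apply le_antisymm
  · have h := (CIRL.resid (imp 1 a) 1 a).2 le_rfl
    rwa [mul_one] at h
  · exact (CIRL.resid _ _ _).1 (mul_one a).le

theorem CIRL.inf_one' {L : Type*} [CIRL L] (a : L) : a ⊓ 1 = a :=
  inf_eq_left.2 (CIRL.le_one a)

theorem CIRL.sup_one' {L : Type*} [CIRL L] (a : L) : a ⊔ 1 = 1 :=
  sup_eq_right.2 (CIRL.le_one a)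

/-- `K(L)` satisfies the equations (K1) and (K2), where `¬X = X ⇨ (1,1)`. -/
theorem stmt3 {L : Type*} [CIRL L] (X Y : L × L) :
    kmeet (kmul X Y) kone = kmul (kmeet X kone) (kmeet Y kone) ∧
    kmeet (kimp (kmeet X kone) Y)
        (kimp (kmeet (kimp Y kone) kone) (kimp X kone)) = kimp X Y := by
  obtain ⟨a, b⟩ := X
  obtain ⟨c, d⟩ := Y
  simp only [kmeet, kmul, kimp, kone, CIRL.imp_one', CIRL.one_imp', CIRL.inf_one',
    CIRL.sup_one', mul_one, mul_comm d a, sup_idem, inf_idem, and_self,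
    inf_comm (1 : L)]
end

section
/- Let A be a commutative residuated lattice satisfying (K1): (x·y) ∧ 1 = (x ∧ 1)·(y ∧ 1) for all x, y. Then A satisfies (x ∧ 1) ⇨₁ y = (x ∧ 1) ⇨₁ (y ∧ 1) for all x, y, where a ⇨₁ b = (a ⇨ b) ∧ 1. -/
/-- A commutative residuated lattice (not necessarily integral). -/
class CRL (A : Type*) extends Lattice A, CommMonoid A where
  imp : A → A → A
  resid : ∀ a b c : A, a * b ≤ c ↔ a ≤ imp b c

namespace CRL

/-- `a ⇨₁ b = (a ⇨ b) ∧ 1`. -/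
def imp1 {A : Type*} [CRL A] (a b : A) : A := imp a b ⊓ 1

end CRL

/-- In any commutative residuated lattice satisfying (K1),
`(x ∧ 1) ⇨₁ y = (x ∧ 1) ⇨₁ (y ∧ 1)` holds. -/
theorem stmt6 {A : Type*} [CRL A]
    (hK1 : ∀ x y : A, (x * y) ⊓ 1 = (x ⊓ 1) * (y ⊓ 1)) :
    ∀ x y : A, CRL.imp1 (x ⊓ 1) y = CRL.imp1 (x ⊓ 1) (y ⊓ 1) := by
  intro x y
  have key : ∀ z : A, z ≤ 1 → z * (x ⊓ 1) ≤ 1 := by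
    intro z hz
    have h := hK1 z x
    rw [inf_eq_left.mpr hz] at h
    rw [← h]
    exact inf_le_right
  have hz : ∀ z : A, z ≤ CRL.imp1 (x ⊓ 1) y ↔ z ≤ CRL.imp1 (x ⊓ 1) (y ⊓ 1) := by
    intro z
    unfold CRL.imp1
    rw [le_inf_iff, le_inf_iff, ← CRL.resid, ← CRL.resid, le_inf_iff]
    exact ⟨fun h => ⟨⟨h.1, key z h.2⟩, h.2⟩, fun h => ⟨h.1.1, h.2⟩⟩
  exact le_antisymm ((hz _).1 le_rfl) ((hz _).2 le_rfl)
end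

section
/- Let L be a commutative integral residuated lattice with least element 0 such that 0 ≠ 1 and 0 is meet-irreducible (for all a, b ∈ L, a ∧ b = 0 implies a = 0 or b = 0). Then the set (L × L) \ {(0,0)} is an admissible subuniverse of K(L): it contains (a,1) for every a ∈ L and is closed under the K-expansion operations ∨, ∧, ·, ⇨; in particular, for all (a,b), (c,d) ∈ L × L with (a,b) ≠ (0,0) and (c,d) ≠ (0,0), both (a,b) ∧ (c,d) ≠ (0,0) and (a,b) · (c,d) ≠ (0,0). -/
open CIRL

theorem CIRL.core8 {L : Type*} [CIRL L] (z : L) (hz : ∀ a : L, z ≤ a) (a c d : L)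
    (h1 : a * c = z) (h2 : imp a d = z) : c = z ∧ d = z := by
  have hd : d = z := by
    apply le_antisymm _ (hz d)
    rw [← h2, ← resid]
    have h : a ≤ imp d d := le_trans (le_one a) ((resid 1 d d).1 (by rw [one_mul]))
    have h' := (resid a d d).2 h
    rwa [mul_comm] at h'
  refine ⟨?_, hd⟩
  apply le_antisymm _ (hz c)
  have h : c ≤ imp a d := by
    rw [← resid, mul_comm, h1]
    exact hz d
  rwa [h2] at h

/-- If `L` is a CIRL with least element `0 ≠ 1` in which `0` is meet-irreducible,
then `(L × L) \ {(0,0)}` is an admissible subuniverse of `K(L)`. -/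
theorem stmt8 {L : Type*} [CIRL L] (z : L) (hz : ∀ a : L, z ≤ a) (hne : z ≠ 1)
    (hirr : ∀ a b : L, a ⊓ b = z → a = z ∨ b = z) :
    let S : Set (L × L) := {p | p ≠ (z, z)}
    (∀ a : L, (a, (1 : L)) ∈ S) ∧
    kone ∈ S ∧
    (∀ X Y : L × L, X ∈ S → Y ∈ S →
      kjoin X Y ∈ S ∧ kmeet X Y ∈ S ∧ kmul X Y ∈ S ∧ kimp X Y ∈ S) ∧
    (∀ X Y : L × L, X ≠ (z, z) → Y ≠ (z, z) →
      kmeet X Y ≠ (z, z) ∧ kmul X Y ≠ (z, z)) := by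
  intro S
  have hsup : ∀ a b : L, a ⊔ b = z → a = z ∧ b = z := fun a b h =>
    ⟨le_antisymm (h ▸ le_sup_left) (hz a), le_antisymm (h ▸ le_sup_right) (hz b)⟩
  have hj : ∀ X Y : L × L, X ≠ (z, z) → Y ≠ (z, z) → kjoin X Y ≠ (z, z) := by
    rintro ⟨a, b⟩ ⟨c, d⟩ hX hY h
    simp only [kjoin, Prod.mk.injEq] at h
    obtain ⟨rfl, rfl⟩ := hsup _ _ h.1
    rcases hirr _ _ h.2 with rfl | rfl
    · exact hX rfl
    · exact hY rfl
  have hm : ∀ X Y : L × L, X ≠ (z, z) → Y ≠ (z, z) → kmeet X Y ≠ (z, z) := by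
    rintro ⟨a, b⟩ ⟨c, d⟩ hX hY h
    simp only [kmeet, Prod.mk.injEq] at h
    obtain ⟨rfl, rfl⟩ := hsup _ _ h.2
    rcases hirr _ _ h.1 with rfl | rfl
    · exact hX rfl
    · exact hY rfl
  have hmul : ∀ X Y : L × L, X ≠ (z, z) → Y ≠ (z, z) → kmul X Y ≠ (z, z) := by
    rintro ⟨a, b⟩ ⟨c, d⟩ hX hY h
    simp only [kmul, Prod.mk.injEq] at h
    rcases hirr _ _ h.2 with h2 | h2
    · obtain ⟨h3, h4⟩ := core8 z hz a c d h.1 h2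
      exact hY (by rw [h3, h4])
    · obtain ⟨h3, h4⟩ := core8 z hz c a b (by rw [mul_comm]; exact h.1) h2
      exact hX (by rw [h3, h4])
  have himp : ∀ X Y : L × L, X ≠ (z, z) → Y ≠ (z, z) → kimp X Y ≠ (z, z) := by
    rintro ⟨a, b⟩ ⟨c, d⟩ hX hY h
    simp only [kimp, Prod.mk.injEq] at h
    rcases hirr _ _ h.1 with h2 | h2
    · obtain ⟨h3, h4⟩ := core8 z hz a d c h.2 h2
      exact hY (by rw [h3, h4])
    · obtain ⟨h3, h4⟩ := core8 z hz d a b (by rw [mul_comm]; exact h.2) h2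
      exact hX (by rw [h3, h4])
  refine ⟨fun a h => hne (congrArg Prod.snd h).symm, fun h => hne (congrArg Prod.snd h).symm,
    fun X Y hX hY => ⟨hj X Y hX hY, hm X Y hX hY, hmul X Y hX hY, himp X Y hX hY⟩,
    fun X Y hX hY => ⟨hm X Y hX hY, hmul X Y hX hY⟩⟩
end

section
/- Let L be a commutative integral residuated lattice with least element 0 that is involutive: (b ⇨ 0) ⇨ 0 = b for all b ∈ L. For a, b ∈ L write a ⊕ b = (a ⇨ 0) ⇨ b. Then for every lattice filter F of L, the set K(L,F) = {(a,b) ∈ L × L : a ⊕ b ∈ F} is an admissible subuniverse of K(L): it contains (a,1) for every a ∈ L and is closed under the K-expansion operations ∨, ∧, ·, ⇨. -/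
theorem cirl_mul_mono {L : Type*} [CIRL L] {a b : L} (c : L) (h : a ≤ b) : a * c ≤ b * c :=
  (CIRL.resid _ _ _).2 (h.trans ((CIRL.resid _ _ _).1 le_rfl))

theorem cirl_mul_mono' {L : Type*} [CIRL L] {a b : L} (c : L) (h : a ≤ b) : c * a ≤ c * b := by
  rw [mul_comm c, mul_comm c]; exact cirl_mul_mono c h

theorem cirl_neg_mul {L : Type*} [CIRL L] (z a c : L) :
    CIRL.imp (a * c) z * a ≤ CIRL.imp c z := by
  rw [← CIRL.resid, mul_assoc, CIRL.resid]

theorem cirl_neg_anti {L : Type*} [CIRL L] (z : L) {a c : L} (h : a ≤ c) :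
    CIRL.imp c z ≤ CIRL.imp a z := by
  rw [← CIRL.resid]
  exact (cirl_mul_mono' _ h).trans ((CIRL.resid _ _ _).2 le_rfl)

theorem cirl_swap {L : Type*} [CIRL L] (z : L)
    (hinv : ∀ b : L, CIRL.imp (CIRL.imp b z) z = b) {x a b : L}
    (h : x * CIRL.imp a z ≤ b) : x * CIRL.imp b z ≤ a := by
  rw [← hinv b, ← CIRL.resid] at h
  rw [← hinv a, ← CIRL.resid]
  rwa [mul_right_comm]

open CIRL

/-- If `L` is an involutive CIRL with least element `0` and `F` is a lattice
filter of `L`, then `K(L,F) = {(a,b) : a ⊕ b ∈ F}` is an admissible subuniverse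
of `K(L)`. -/
theorem stmt9 {L : Type*} [CIRL L] (z : L) (hz : ∀ a : L, z ≤ a)
    (hinv : ∀ b : L, CIRL.imp (CIRL.imp b z) z = b)
    (F : Set L) (hFne : F.Nonempty)
    (hFup : ∀ a b : L, a ∈ F → a ≤ b → b ∈ F)
    (hFmeet : ∀ a b : L, a ∈ F → b ∈ F → a ⊓ b ∈ F) :
    let oplus : L → L → L := fun a b => CIRL.imp (CIRL.imp a z) b
    let S : Set (L × L) := {p | oplus p.1 p.2 ∈ F}
    (∀ a : L, (a, (1 : L)) ∈ S) ∧
    kone ∈ S ∧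
    (∀ X Y : L × L, X ∈ S → Y ∈ S →
      kjoin X Y ∈ S ∧ kmeet X Y ∈ S ∧ kmul X Y ∈ S ∧ kimp X Y ∈ S) := by
  intro oplus S
  have key : ∀ (x : L), x ∈ F → ∀ p : L × L, x * imp p.1 z ≤ p.2 → p ∈ S := by
    intro x hx p h
    exact hFup _ _ hx ((resid _ _ _).1 h)
  obtain ⟨f, hf⟩ := hFne
  have h1 : ∀ a : L, (a, (1 : L)) ∈ S := fun a => key f hf _ (le_one _)
  refine ⟨h1, h1 1, ?_⟩
  rintro ⟨a, b⟩ ⟨c, d⟩ hX hY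
  have hxF := hFmeet _ _ hX hY
  have hab : (oplus a b ⊓ oplus c d) * imp a z ≤ b := (resid _ _ _).2 inf_le_left
  have hcd : (oplus a b ⊓ oplus c d) * imp c z ≤ d := (resid _ _ _).2 inf_le_right
  have hxF' : oplus a b ⊓ oplus c d ∈ F := hxF
  generalize oplus a b ⊓ oplus c d = x at hab hcd hxF'
  have hba := cirl_swap z hinv hab
  have hdc := cirl_swap z hinv hcd
  refine ⟨key x hxF' _ ?_, key x hxF' _ ?_, key x hxF' _ ?_, key x hxF' _ ?_⟩
  · exact le_inf ((cirl_mul_mono' x (cirl_neg_anti z le_sup_left)).trans hab)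
      ((cirl_mul_mono' x (cirl_neg_anti z le_sup_right)).trans hcd)
  · apply cirl_swap z hinv
    exact le_inf ((cirl_mul_mono' x (cirl_neg_anti z le_sup_left)).trans hba)
      ((cirl_mul_mono' x (cirl_neg_anti z le_sup_right)).trans hdc)
  · refine le_inf ?_ ?_
    · rw [← resid, mul_assoc]
      exact (cirl_mul_mono' x (cirl_neg_mul z a c)).trans hcd
    · rw [← resid, mul_assoc]
      refine (cirl_mul_mono' x ?_).trans hab
      change imp (a * c) z * c ≤ _
      rw [mul_comm a c]
      exact cirl_neg_mul z c a
  · apply cirl_swap z hinv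
    refine le_inf ?_ ?_
    · rw [← resid, mul_assoc]
      exact (cirl_mul_mono' x (cirl_neg_mul z a d)).trans hdc
    · rw [← resid, mul_assoc]
      refine (cirl_mul_mono' x ?_).trans hab
      change imp (a * d) z * d ≤ _
      rw [mul_comm a d]
      exact cirl_neg_mul z d a
end

section
/- Let B be a generalized Heyting algebra (a Brouwerian lattice): a lattice with greatest element ⊤ and a binary operation ⇨ with a ∧ b ≤ c if and only if a ≤ b ⇨ c. Let F be a regular filter of B, i.e. a lattice filter containing every dense element a ∨ (a ⇨ b) for a, b ∈ B. Then the set K(B,F) = {(a,b) ∈ B × B : a ∨ b ∈ F} is an admissible subuniverse of K(B): it contains (a,⊤) for every a ∈ B and is closed under the K-expansion operations ∨, ∧, ·, ⇨ (where the monoid product of B is ∧ with unit ⊤). -/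
/-- If `B` is a generalized Heyting algebra (Brouwerian lattice) and `F` is a
regular filter of `B` (a lattice filter containing every dense element
`a ⊔ (a ⇨ b)`), then `K(B,F) = {(a,b) : a ⊔ b ∈ F}` is an admissible
subuniverse of `K(B)`, where the monoid product of `B` is `⊓` with unit `⊤`. -/
theorem stmt11 {B : Type*} [GeneralizedHeytingAlgebra B] (F : Set B)
    (hFne : F.Nonempty)
    (hFup : ∀ a b : B, a ∈ F → a ≤ b → b ∈ F)
    (hFmeet : ∀ a b : B, a ∈ F → b ∈ F → a ⊓ b ∈ F)
    (hFreg : ∀ a b : B, a ⊔ (a ⇨ b) ∈ F) :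
    let kjoin : B × B → B × B → B × B := fun X Y => (X.1 ⊔ Y.1, X.2 ⊓ Y.2)
    let kmeet : B × B → B × B → B × B := fun X Y => (X.1 ⊓ Y.1, X.2 ⊔ Y.2)
    let kmul : B × B → B × B → B × B :=
      fun X Y => (X.1 ⊓ Y.1, (X.1 ⇨ Y.2) ⊓ (Y.1 ⇨ X.2))
    let kimp : B × B → B × B → B × B :=
      fun X Y => ((X.1 ⇨ Y.1) ⊓ (Y.2 ⇨ X.2), X.1 ⊓ Y.2)
    let S : Set (B × B) := {p | p.1 ⊔ p.2 ∈ F}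
    (∀ a : B, (a, (⊤ : B)) ∈ S) ∧
    ((⊤ : B), (⊤ : B)) ∈ S ∧
    (∀ X Y : B × B, X ∈ S → Y ∈ S →
      kjoin X Y ∈ S ∧ kmeet X Y ∈ S ∧ kmul X Y ∈ S ∧ kimp X Y ∈ S) := by
  have htop : (⊤ : B) ∈ F := by
    obtain ⟨x, hx⟩ := hFne
    exact hFup x ⊤ hx le_top
  intro kjoin kmeet kmul kimp S
  refine ⟨fun a => ?_, ?_, ?_⟩
  · change a ⊔ ⊤ ∈ F
    rw [sup_top_eq]; exact htop
  · change (⊤ : B) ⊔ ⊤ ∈ F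
    rw [sup_top_eq]; exact htop
  · rintro ⟨a, b⟩ ⟨c, d⟩ hX hY
    change a ⊔ b ∈ F at hX
    change c ⊔ d ∈ F at hY
    refine ⟨?_, ?_, ?_, ?_⟩
    · change (a ⊔ c) ⊔ (b ⊓ d) ∈ F
      rw [sup_inf_left]
      exact hFmeet _ _ (hFup _ _ hX (sup_le_sup_right le_sup_left _))
        (hFup _ _ hY (sup_le_sup_right le_sup_right _))
    · change (a ⊓ c) ⊔ (b ⊔ d) ∈ F
      rw [sup_inf_right]
      exact hFmeet _ _ (hFup _ _ hX (sup_le_sup_left le_sup_left _))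
        (hFup _ _ hY (sup_le_sup_left le_sup_right _))
    · change (a ⊓ c) ⊔ ((a ⇨ d) ⊓ (c ⇨ b)) ∈ F
      rw [sup_inf_right, sup_inf_left, sup_inf_left]
      exact hFmeet _ _
        (hFmeet _ _ (hFreg a d) (hFup _ _ hX (sup_le_sup_left le_himp _)))
        (hFmeet _ _ (hFup _ _ hY (sup_le_sup_left le_himp _)) (hFreg c b))
    · change ((a ⇨ c) ⊓ (d ⇨ b)) ⊔ (a ⊓ d) ∈ F
      rw [sup_comm, sup_inf_right, sup_inf_left, sup_inf_left]
      refine hFmeet _ _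
        (hFmeet _ _ (hFreg a c) (hFup _ _ hX (sup_le_sup_left le_himp _)))
        (hFmeet _ _ (hFup _ _ hY ?_) (hFreg d b))
      rw [sup_comm]
      exact sup_le_sup_left le_himp _
end

section
/- Let A be a K-lattice whose negative cone is cancellative, that is, (a ⇨ a·b) ∧ 1 = b for all a, b ∈ A with a ≤ 1 and b ≤ 1. Then the map f(a) = (a ∧ 1, ¬a ∧ 1) from A to A^- × A^- is surjective: for all u, v ∈ A with u ≤ 1 and v ≤ 1 there exists c ∈ A with c ∧ 1 = u and ¬c ∧ 1 = v. -/
/-- A K-lattice: a commutative residuated lattice that is 1-involutive,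
1-distributive and satisfies the equations (K1) and (K2). -/
class KLattice (A : Type*) extends Lattice A, CommMonoid A where
  imp : A → A → A
  resid : ∀ a b c : A, a * b ≤ c ↔ a ≤ imp b c
  inv1 : ∀ x : A, imp (imp x 1) 1 = x
  dist1 : ∀ x y z : A, (x = 1 ∨ y = 1 ∨ z = 1) →
    x ⊓ (y ⊔ z) = (x ⊓ y) ⊔ (x ⊓ z) ∧ x ⊔ (y ⊓ z) = (x ⊔ y) ⊓ (x ⊔ z)
  k1 : ∀ x y : A, (x * y) ⊓ 1 = (x ⊓ 1) * (y ⊓ 1)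
  k2 : ∀ x y : A,
    imp (x ⊓ 1) y ⊓ imp (imp y 1 ⊓ 1) (imp x 1) = imp x y

namespace KLattice

/-- The involution `¬x = x ⇨ 1`. -/
def neg {A : Type*} [KLattice A] (x : A) : A := imp x 1

end KLattice

open KLattice

/-- If `A` is a K-lattice whose negative cone is cancellative, then the
canonical embedding `a ↦ (a ∧ 1, ¬a ∧ 1)` of `A` into `K(A⁻)` is surjective. -/
theorem stmt12 {A : Type*} [KLattice A]
    (hcanc : ∀ a b : A, a ≤ 1 → b ≤ 1 → KLattice.imp a (a * b) ⊓ 1 = b) :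
    ∀ u v : A, u ≤ 1 → v ≤ 1 → ∃ c : A, c ⊓ 1 = u ∧ neg c ⊓ 1 = v := by
  intro u v hu hv
  have mono : ∀ a b c : A, a ≤ b → a * c ≤ b * c := fun a b c h =>
    (resid a c (b * c)).2 (h.trans ((resid b c (b * c)).1 le_rfl))
  have huv : u * v ≤ 1 := by
    have h := mono u 1 v hu
    rw [one_mul] at h
    exact h.trans hv
  have hn : (1 : A) ≤ imp (u * v) 1 := by
    rw [← resid, one_mul]
    exact huv
  refine ⟨u * imp (u * v) 1, ?_, ?_⟩
  · rw [k1, inf_eq_left.2 hu, inf_eq_right.2 hn, mul_one]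
  · have key : neg (u * imp (u * v) 1) = imp u (u * v) := by
      unfold neg
      have h : ∀ x : A, x ≤ imp (u * imp (u * v) 1) 1 ↔ x ≤ imp u (u * v) := by
        intro x
        rw [← resid, ← mul_assoc, resid, inv1, resid]
      exact le_antisymm ((h _).1 le_rfl) ((h _).2 le_rfl)
    rw [key]
    exact hcanc u v hu hv
end

section
/- Let A be a K-lattice with least element 0 such that 0 ≠ 1, and set ⊤ = 0 ⇨ 1. Then ⊤ is the greatest element of A, and the three-element set {0, 1, ⊤} is a subuniverse of A: it is closed under ∧, ∨, ·, ⇨; in particular 0·0 = 0, ⊤·⊤ = ⊤, 0·⊤ = 0, 0 ⇨ 1 = ⊤ and ⊤ ⇨ 1 = 0. -/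
open KLattice

/-- In a nontrivial K-lattice with least element `0`, the element `⊤ = 0 ⇨ 1`
is the greatest element and `{0, 1, ⊤}` is a subuniverse (isomorphic to K₃). -/
theorem stmt13 {A : Type*} [KLattice A] (z : A) (hz : ∀ a : A, z ≤ a)
    (hne : z ≠ 1) :
    let top : A := KLattice.imp z 1
    let S : Set A := {z, 1, top}
    (∀ a : A, a ≤ top) ∧
    (∀ x ∈ S, ∀ y ∈ S, x ⊓ y ∈ S ∧ x ⊔ y ∈ S ∧ x * y ∈ S ∧ KLattice.imp x y ∈ S) ∧
    z * z = z ∧ top * top = top ∧ z * top = z ∧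
    KLattice.imp z 1 = top ∧ KLattice.imp top 1 = z := by
  intro top S
  have hzm : ∀ a : A, a * z = z := fun a => by
    refine le_antisymm ?_ (hz _)
    rw [mul_comm]
    exact (resid z a z).2 (hz _)
  have hzm' : ∀ a : A, z * a = z := fun a => by rw [mul_comm, hzm]
  have htop : ∀ a : A, a ≤ top := fun a => (resid a z 1).1 (by rw [hzm]; exact hz _)
  have htt : top * top = top := by
    refine le_antisymm (htop _) ?_
    have h1 : top ≤ imp top (top * top) := (resid _ _ _).1 le_rfl
    have h2 : (1 : A) * top ≤ top * top := (resid _ _ _).2 ((htop 1).trans h1)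
    rwa [one_mul] at h2
  have hnt : imp top 1 = z := inv1 z
  have hzi : ∀ y : A, imp z y = top := fun y =>
    le_antisymm (htop _) ((resid _ _ _).1 (by rw [hzm]; exact hz _))
  have hit : ∀ y : A, imp y top = top := fun y =>
    le_antisymm (htop _) ((resid _ _ _).1 (htop _))
  have h1i : ∀ y : A, imp 1 y = y := fun y => by
    apply le_antisymm
    · have := (resid (imp 1 y) 1 y).2 le_rfl
      rwa [mul_one] at this
    · exact (resid _ _ _).1 (by rw [mul_one])
  have htz : imp top z = z := by
    refine le_antisymm ?_ (hz _)
    rw [← k2 top z, inf_eq_right.2 (htop 1), h1i]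
    exact inf_le_left
  refine ⟨htop, ?_, hzm z, htt, hzm' top, rfl, hnt⟩
  have mz : z ∈ S := Or.inl rfl
  have m1 : (1 : A) ∈ S := Or.inr (Or.inl rfl)
  have mt : top ∈ S := Or.inr (Or.inr rfl)
  have a1 : ∀ a : A, z ⊓ a = z := fun a => inf_eq_left.2 (hz a)
  have a2 : ∀ a : A, a ⊓ z = z := fun a => inf_eq_right.2 (hz a)
  have a3 : ∀ a : A, z ⊔ a = a := fun a => sup_eq_right.2 (hz a)
  have a4 : ∀ a : A, a ⊔ z = a := fun a => sup_eq_left.2 (hz a)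
  have b1 : ∀ a : A, top ⊓ a = a := fun a => inf_eq_right.2 (htop a)
  have b2 : ∀ a : A, a ⊓ top = a := fun a => inf_eq_left.2 (htop a)
  have b3 : ∀ a : A, top ⊔ a = top := fun a => sup_eq_left.2 (htop a)
  have b4 : ∀ a : A, a ⊔ top = top := fun a => sup_eq_right.2 (htop a)
  clear_value top
  rintro x (rfl | rfl | rfl) y (rfl | rfl | rfl) <;>
    simp only [a1, a2, a3, a4, b1, b2, b3, b4, hzm, hzm', htt, hnt, hzi, hit, h1i, htz,
      one_mul, mul_one, inf_idem, sup_idem, mz, m1, mt, and_self]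
end

section
/- Let L be a commutative integral residuated lattice. Then for all a, b ∈ L and every natural number k ≥ 2, the k-th power of (a,b) in K(L) equals (a^k, a^{k-1} ⇨ b). -/
open CIRL

namespace CIRL

/-- Powers in `K(L)` with respect to the K-expansion product. -/
def kpow {L : Type*} [CIRL L] (X : L × L) : ℕ → L × L
  | 0 => kone
  | n + 1 => kmul X (kpow X n)

end CIRL

theorem CIRL.kpow_succ_aux {L : Type*} [CIRL L] (a b : L) (n : ℕ) :
    kpow (a, b) (n + 1) = (a ^ (n + 1), CIRL.imp (a ^ n) b) := by
  induction n with
  | zero =>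
    have h1 : CIRL.imp a (1 : L) ⊓ CIRL.imp 1 b = CIRL.imp 1 b := by
      apply inf_eq_right.mpr
      rw [← CIRL.resid]
      exact CIRL.le_one _
    simp [kpow, kmul, kone, h1]
  | succ n ih =>
    have h2 : CIRL.imp a (CIRL.imp (a ^ n) b) = CIRL.imp (a ^ (n + 1)) b := by
      apply eq_of_forall_le_iff
      intro c
      rw [← CIRL.resid, ← CIRL.resid, ← CIRL.resid, mul_assoc, pow_succ']
    rw [kpow, ih]
    simp only [kmul, h2, inf_idem]
    rw [pow_succ' a (n + 1)]

/-- For `k ≥ 2`, the `k`-th power of `(a,b)` in `K(L)` is `(a^k, a^(k-1) ⇨ b)`. -/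
theorem stmt15 {L : Type*} [CIRL L] (a b : L) (k : ℕ) (hk : 2 ≤ k) :
    kpow (a, b) k = (a ^ k, CIRL.imp (a ^ (k - 1)) b) := by
  obtain ⟨n, rfl⟩ : ∃ n, k = n + 1 := ⟨k - 1, by omega⟩
  exact CIRL.kpow_succ_aux a b n
end

section
/- Let n ≥ 1 and let L be a commutative integral residuated lattice that is n-potent: x^n = x^{n+1} for all x ∈ L. Then K(L) is (n+1)-potent: X^{n+1} = X^{n+2} for every X ∈ K(L). -/
open CIRL

theorem kpow_succ_aux {L : Type*} [CIRL L] (X : L × L) (k : ℕ) :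
    kpow X (k + 1) = (X.1 ^ (k + 1), imp (X.1 ^ k) X.2) := by
  induction k with
  | zero =>
    have h : imp X.1 (1 : L) = 1 :=
      le_antisymm (CIRL.le_one _) ((CIRL.resid _ _ _).1 (CIRL.le_one _))
    have h2 : imp (1 : L) X.2 ≤ 1 := CIRL.le_one _
    simp [kpow, kmul, kone, h, h2]
  | succ k ih =>
    have h : imp X.1 (imp (X.1 ^ k) X.2) = imp (X.1 ^ (k + 1)) X.2 := by
      apply eq_of_forall_le_iff
      intro c
      rw [← CIRL.resid, ← CIRL.resid, ← CIRL.resid, mul_assoc, ← pow_succ']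
    rw [kpow, ih]
    simp only [kmul, h, inf_idem, ← pow_succ']

/-- If `L` is an `n`-potent CIRL (`n ≥ 1`), then `K(L)` is `(n+1)`-potent. -/
theorem stmt16 {L : Type*} [CIRL L] (n : ℕ) (hn : 1 ≤ n)
    (hpot : ∀ x : L, x ^ n = x ^ (n + 1)) :
    ∀ X : L × L, kpow X (n + 1) = kpow X (n + 2) := by
  intro X
  rw [kpow_succ_aux X n, kpow_succ_aux X (n + 1), ← hpot X.1, pow_succ X.1 (n + 1), ← hpot X.1,
    ← pow_succ, ← hpot X.1]
end

section
/- Let A be a K-lattice that is distributive (as a lattice) and satisfies (x ∧ 1)·(x ∧ 1) = x ∧ 1 for all x (i.e. A is a Nelson paraconsistent lattice). Then: (i) the set F = {(a ∨ ¬a) ∧ 1 : a ∈ A} is a lattice filter of the negative cone A^- containing every element of the form u ∨ (u ⇨₁ v) with u, v ∈ A^-; and (ii) the map f(a) = (a ∧ 1, ¬a ∧ 1) is a bijection from A onto the set K(A^-, F) = {(u,v) : u ≤ 1, v ≤ 1, u ∨ v ∈ F}. -/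
open KLattice

namespace KAux

variable {A : Type*} [KLattice A]

lemma mulmono {a b c d : A} (h : a ≤ b) (h' : c ≤ d) : a * c ≤ b * d := by
  have h1 : ∀ x y z : A, x ≤ y → x * z ≤ y * z := fun x y z h =>
    (resid x z (y * z)).2 (h.trans ((resid y z (y * z)).1 le_rfl))
  calc a * c ≤ b * c := h1 _ _ _ h
    _ = c * b := mul_comm _ _
    _ ≤ d * b := h1 _ _ _ h'
    _ = b * d := mul_comm _ _

lemma negneg (x : A) : neg (neg x) = x := inv1 x

lemma le_neg {x y : A} : x ≤ neg y ↔ x * y ≤ 1 := (resid x y 1).symm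

lemma le_neg_comm {x y : A} : x ≤ neg y ↔ y ≤ neg x := by
  rw [le_neg, le_neg, mul_comm]

lemma neg_anti {x y : A} (h : x ≤ y) : neg y ≤ neg x := by
  rw [le_neg_comm, negneg]; exact h

lemma neg_sup (x y : A) : neg (x ⊔ y) = neg x ⊓ neg y := by
  apply le_antisymm
  · exact le_inf (neg_anti le_sup_left) (neg_anti le_sup_right)
  · rw [le_neg_comm]
    exact sup_le (le_neg_comm.1 inf_le_left) (le_neg_comm.1 inf_le_right)

lemma neg_mul (x y : A) : neg (x * y) = KLattice.imp x (neg y) := by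
  have key : ∀ w : A, w ≤ neg (x * y) ↔ w ≤ KLattice.imp x (neg y) := by
    intro w
    rw [le_neg, ← resid, le_neg, mul_assoc]
  exact le_antisymm ((key _).1 le_rfl) ((key _).2 le_rfl)

def R (u v : A) : Prop := ∃ a : A, a ⊓ 1 = u ∧ neg a ⊓ 1 = v

def h (u v : A) : A := KLattice.imp u v ⊓ 1

lemma R.le1 {u v : A} (r : R u v) : u ≤ 1 := by
  obtain ⟨a, rfl, rfl⟩ := r; exact inf_le_right

lemma R.le2 {u v : A} (r : R u v) : v ≤ 1 := by
  obtain ⟨a, rfl, rfl⟩ := r; exact inf_le_right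

lemma R.swap {u v : A} (r : R u v) : R v u := by
  obtain ⟨a, h1, h2⟩ := r
  exact ⟨neg a, h2, by rw [negneg, h1]⟩

lemma R.sup (hdist : ∀ x y z : A, x ⊓ (y ⊔ z) = (x ⊓ y) ⊔ (x ⊓ z))
    {u v u' v' : A} (r : R u v) (r' : R u' v') : R (u ⊔ u') (v ⊓ v') := by
  obtain ⟨a, rfl, rfl⟩ := r
  obtain ⟨b, rfl, rfl⟩ := r'
  refine ⟨a ⊔ b, ?_, ?_⟩
  · rw [inf_comm, hdist, inf_comm 1 a, inf_comm 1 b]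
  · rw [neg_sup, inf_inf_distrib_right]

lemma R.inf (hdist : ∀ x y z : A, x ⊓ (y ⊔ z) = (x ⊓ y) ⊔ (x ⊓ z))
    {u v u' v' : A} (r : R u v) (r' : R u' v') : R (u ⊓ u') (v ⊔ v') :=
  (r.swap.sup hdist r'.swap).swap

lemma R.one {u : A} (hu : u ≤ 1) : R u 1 := by
  refine ⟨u, inf_eq_left.2 hu, inf_eq_right.2 ?_⟩
  rw [le_neg, one_mul]; exact hu

lemma mul_eq (hidem : ∀ x : A, (x ⊓ 1) * (x ⊓ 1) = x ⊓ 1) {u v : A}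
    (hu : u ≤ 1) (hv : v ≤ 1) : u * v = u ⊓ v := by
  apply le_antisymm
  · apply le_inf
    · simpa using mulmono (le_refl u) hv
    · simpa using mulmono hu (le_refl v)
  · have := hidem (u ⊓ v)
    rw [inf_eq_left.2 (inf_le_left.trans hu)] at this
    rw [← this]
    exact mulmono inf_le_left inf_le_right

lemma le_h (hidem : ∀ x : A, (x ⊓ 1) * (x ⊓ 1) = x ⊓ 1) {u v w : A}
    (hu : u ≤ 1) (hw : w ≤ 1) : w ≤ h u v ↔ w ⊓ u ≤ v := by
  rw [← mul_eq hidem hw hu, resid, h, le_inf_iff]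
  exact ⟨fun h => h.1, fun h => ⟨h, hw⟩⟩

lemma h_le (u v : A) : h u v ≤ 1 := inf_le_right

lemma h_mp (hidem : ∀ x : A, (x ⊓ 1) * (x ⊓ 1) = x ⊓ 1) {u v : A}
    (hu : u ≤ 1) : h u v ⊓ u ≤ v := (le_h hidem hu (h_le u v)).1 le_rfl

lemma h_inf1 {u y : A} (hu : u ≤ 1) : KLattice.imp u y ⊓ 1 = h u (y ⊓ 1) := by
  have key : ∀ w : A, w ≤ KLattice.imp u y ⊓ 1 ↔ w ≤ h u (y ⊓ 1) := by
    intro w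
    rw [h, le_inf_iff, le_inf_iff, ← resid, ← resid, le_inf_iff]
    constructor
    · rintro ⟨h1, h2⟩
      exact ⟨⟨h1, by simpa using mulmono h2 hu⟩, h2⟩
    · rintro ⟨⟨h1, _⟩, h2⟩
      exact ⟨h1, h2⟩
  exact le_antisymm ((key _).1 le_rfl) ((key _).2 le_rfl)

lemma R.mul (hidem : ∀ x : A, (x ⊓ 1) * (x ⊓ 1) = x ⊓ 1)
    {u v u' v' : A} (r : R u v) (r' : R u' v') :
    R (u ⊓ u') (h u v' ⊓ h u' v) := by
  obtain ⟨a, rfl, rfl⟩ := r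
  obtain ⟨b, rfl, rfl⟩ := r'
  refine ⟨a * b, ?_, ?_⟩
  · rw [k1, mul_eq hidem inf_le_right inf_le_right]
  · rw [neg_mul, ← k2]
    change (KLattice.imp (a ⊓ 1) (neg b) ⊓
      KLattice.imp (neg (neg b) ⊓ 1) (neg a)) ⊓ 1 = _
    rw [negneg, inf_inf_distrib_right, h_inf1 inf_le_right, h_inf1 inf_le_right]

lemma R.imp (hidem : ∀ x : A, (x ⊓ 1) * (x ⊓ 1) = x ⊓ 1)
    {u v : A} (hu : u ≤ 1) (hv : v ≤ 1) : R u (h u v) := by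
  have := (R.one hu).mul hidem (R.one hv).swap
  have h1 : h (1 : A) 1 = 1 :=
    le_antisymm (h_le _ _) ((le_h hidem le_rfl le_rfl).2 inf_le_left)
  rwa [h1, inf_eq_left.2 hu, inf_eq_left.2 (h_le _ _)] at this

lemma R.diag (hdist : ∀ x y z : A, x ⊓ (y ⊔ z) = (x ⊓ y) ⊔ (x ⊓ z))
    {s t w : A} (r : R s t) (hw : w ≤ 1) (hst : s ⊔ t ≤ w) : R w w := by
  have hs := le_sup_left.trans hst
  have ht := le_sup_right.trans hst
  have h1 := (r.sup hdist (R.one hw)).inf hdist (R.one hw).swap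
  rwa [sup_eq_right.2 hs, inf_eq_left.2 hw, inf_eq_left.2 r.le2, sup_eq_right.2 ht] at h1

lemma R.diag_inf (hdist : ∀ x y z : A, x ⊓ (y ⊔ z) = (x ⊓ y) ⊔ (x ⊓ z))
    (hidem : ∀ x : A, (x ⊓ 1) * (x ⊓ 1) = x ⊓ 1)
    {d e : A} (r : R d d) (r' : R e e) : R (d ⊓ e) (d ⊓ e) := by
  have h1 := (r.mul hidem r').sup hdist (r.inf hdist r')
  have h2 : h d e ⊓ h e d ⊓ (d ⊔ e) = d ⊓ e := by
    apply le_antisymm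
    · rw [hdist]
      apply sup_le
      · exact le_inf inf_le_right
          ((inf_le_inf_right _ inf_le_left).trans (h_mp hidem r.le1))
      · exact le_inf ((inf_le_inf_right _ inf_le_right).trans (h_mp hidem r'.le1))
          inf_le_right
    · have hw : d ⊓ e ≤ 1 := inf_le_left.trans r.le1
      refine le_inf (le_inf ?_ ?_) (inf_le_left.trans le_sup_left)
      · exact (le_h hidem r.le1 hw).2 (inf_le_left.trans inf_le_right)
      · exact (le_h hidem r'.le1 hw).2 (inf_le_left.trans inf_le_left)
  rwa [sup_idem, h2] at h1

lemma h_sup (hdist : ∀ x y z : A, x ⊓ (y ⊔ z) = (x ⊓ y) ⊔ (x ⊓ z))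
    (hidem : ∀ x : A, (x ⊓ 1) * (x ⊓ 1) = x ⊓ 1)
    {u v : A} (hu : u ≤ 1) (hv : v ≤ 1) : h u v ⊓ (u ⊔ v) = v := by
  apply le_antisymm
  · rw [hdist]
    exact sup_le (h_mp hidem hu) inf_le_right
  · exact le_inf ((le_h hidem hu hv).2 inf_le_left) le_sup_right

lemma R.surj (hdist : ∀ x y z : A, x ⊓ (y ⊔ z) = (x ⊓ y) ⊔ (x ⊓ z))
    (hidem : ∀ x : A, (x ⊓ 1) * (x ⊓ 1) = x ⊓ 1)
    {u v : A} (hu : u ≤ 1) (hv : v ≤ 1) (r : R (u ⊔ v) (u ⊔ v)) : R u v := by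
  have h1 := (R.imp hidem hv hu).swap.inf hdist r
  have h2 : h v u ⊓ (u ⊔ v) = u := by rw [sup_comm]; exact h_sup hdist hidem hv hu
  rw [h2, sup_eq_right.2 (le_sup_right : v ≤ u ⊔ v)] at h1
  have h3 := (R.imp hidem hu hv).sup hdist h1
  rwa [sup_idem, h_sup hdist hidem hu hv] at h3

lemma one_le_imp {a b : A} : 1 ≤ KLattice.imp a b ↔ a ≤ b := by
  rw [← resid, one_mul]

lemma le_of {a b : A} (h1 : a ⊓ 1 = b ⊓ 1) (h2 : neg a ⊓ 1 = neg b ⊓ 1) : a ≤ b := by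
  rw [← one_le_imp, ← k2, le_inf_iff, one_le_imp, one_le_imp]
  refine ⟨h1 ▸ inf_le_left, ?_⟩
  change neg b ⊓ 1 ≤ neg a
  exact h2 ▸ inf_le_left

end KAux

open KAux in
/-- For a Nelson paraconsistent lattice `A` (a distributive K-lattice with
idempotent negative cone): (i) `F = {(a ∨ ¬a) ∧ 1 : a ∈ A}` is a lattice
filter of the negative cone `A⁻` containing all dense elements
`u ∨ (u ⇨₁ v)`; and (ii) `a ↦ (a ∧ 1, ¬a ∧ 1)` is a bijection from `A` onto
`K(A⁻, F) = {(u,v) : u ≤ 1, v ≤ 1, u ∨ v ∈ F}`. -/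
theorem stmt18 {A : Type*} [KLattice A]
    (hdist : ∀ x y z : A, x ⊓ (y ⊔ z) = (x ⊓ y) ⊔ (x ⊓ z))
    (hidem : ∀ x : A, (x ⊓ 1) * (x ⊓ 1) = x ⊓ 1) :
    let F : Set A := {y | ∃ a : A, y = (a ⊔ neg a) ⊓ 1}
    let f : A → A × A := fun a => (a ⊓ 1, neg a ⊓ 1)
    -- (i) `F` is a lattice filter of the negative cone `A⁻`:
    (∀ y ∈ F, y ≤ 1) ∧
    F.Nonempty ∧
    (∀ u v : A, u ∈ F → u ≤ v → v ≤ 1 → v ∈ F) ∧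
    (∀ u v : A, u ∈ F → v ∈ F → u ⊓ v ∈ F) ∧
    (∀ u v : A, u ≤ 1 → v ≤ 1 → u ⊔ (KLattice.imp u v ⊓ 1) ∈ F) ∧
    -- (ii) `f` is a bijection from `A` onto `K(A⁻, F)`:
    Function.Injective f ∧
    Set.range f = {p : A × A | p.1 ≤ 1 ∧ p.2 ≤ 1 ∧ p.1 ⊔ p.2 ∈ F} := by
  intro F f
  have hF : ∀ y : A, y ∈ F ↔ R y y := by
    intro y
    constructor
    · rintro ⟨a, rfl⟩
      have r : R (a ⊓ 1) (neg a ⊓ 1) := ⟨a, rfl, rfl⟩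
      refine r.diag hdist inf_le_right ?_
      exact sup_le (inf_le_inf_right _ le_sup_left) (inf_le_inf_right _ le_sup_right)
    · rintro ⟨a, h1, h2⟩
      refine ⟨a, ?_⟩
      rw [inf_comm, hdist, inf_comm 1 a, inf_comm 1 (neg a), h1, h2, sup_idem]
  refine ⟨?_, ⟨1, (hF 1).2 (R.one le_rfl)⟩, ?_, ?_, ?_, ?_, ?_⟩
  · rintro y ⟨a, rfl⟩
    exact inf_le_right
  · intro u v hu huv hv
    exact (hF v).2 (((hF u).1 hu).diag hdist hv (by simpa using huv))
  · intro u v hu hv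
    exact (hF _).2 (((hF u).1 hu).diag_inf hdist hidem ((hF v).1 hv))
  · intro u v hu hv
    exact (hF _).2 ((R.imp hidem hu hv).diag hdist (sup_le hu inf_le_right) le_rfl)
  · intro a b hab
    have h1 : a ⊓ 1 = b ⊓ 1 := congrArg Prod.fst hab
    have h2 : neg a ⊓ 1 = neg b ⊓ 1 := congrArg Prod.snd hab
    exact le_antisymm (le_of h1 h2) (le_of h1.symm h2.symm)
  · ext ⟨u, v⟩
    constructor
    · rintro ⟨a, ha⟩
      have r : R u v := ⟨a, congrArg Prod.fst ha, congrArg Prod.snd ha⟩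
      exact ⟨r.le1, r.le2, (hF _).2 (r.diag hdist (sup_le r.le1 r.le2) le_rfl)⟩
    · rintro ⟨hu, hv, huv⟩
      obtain ⟨a, h1, h2⟩ := R.surj hdist hidem hu hv ((hF _).1 huv)
      exact ⟨a, Prod.ext h1 h2⟩
end

section
/- Let A be a K-lattice. Then A satisfies the equation (((x ∧ 1) ⇨ y) ∨ ((y ∧ 1) ⇨ x)) ∧ 1 = 1 for all x, y ∈ A if and only if its negative cone is prelinear: (u ⇨₁ v) ∨ (v ⇨₁ u) = 1 for all u, v ∈ A with u ≤ 1 and v ≤ 1. -/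
open KLattice

/-- A K-lattice `A` satisfies `(((x ∧ 1) ⇨ y) ∨ ((y ∧ 1) ⇨ x)) ∧ 1 = 1` for all
`x, y` if and only if its negative cone is prelinear. -/
theorem stmt19 {A : Type*} [KLattice A] :
    (∀ x y : A,
      (KLattice.imp (x ⊓ 1) y ⊔ KLattice.imp (y ⊓ 1) x) ⊓ 1 = 1) ↔
    (∀ u v : A, u ≤ 1 → v ≤ 1 →
      (KLattice.imp u v ⊓ 1) ⊔ (KLattice.imp v u ⊓ 1) = 1) := by
  have mono : ∀ a b c : A, b ≤ c → KLattice.imp a b ≤ KLattice.imp a c := by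
    intro a b c h
    exact (KLattice.resid _ _ _).1 (((KLattice.resid _ _ _).2 le_rfl).trans h)
  constructor
  · intro h u v hu hv
    have h1 := h u v
    rw [inf_eq_left.2 hu, inf_eq_left.2 hv, inf_comm,
      (KLattice.dist1 _ _ _ (Or.inl rfl)).1] at h1
    rw [inf_comm _ (1 : A), inf_comm _ (1 : A)]
    exact h1
  · intro h x y
    apply inf_eq_right.2
    have h1 := h (x ⊓ 1) (y ⊓ 1) inf_le_right inf_le_right
    calc (1 : A) = _ := h1.symm
      _ ≤ _ := sup_le_sup (inf_le_left.trans (mono _ _ _ inf_le_left))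
        (inf_le_left.trans (mono _ _ _ inf_le_left))
end
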